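/- Let K be a number field and let d = 2^k with k ≥ 1 (so d ≥ 2 is an even prime power). Then Per_inf(T_d,K) = 1/4, where T_d is regarded as a polynomial with coefficients in 𝓞_K. -/

import Mathlib

/-!
Write points of a finite field `F` with `q` elements as `x = u + u⁻¹` with `u` in an algebraic
closure; then `T_d` acts by `u ↦ u ^ d`, and `x ∈ F` means `u ^ (q - 1) = 1` or `u ^ (q + 1) = 1`.
For `d = 2 ^ k` with `k ≥ 1` the point `x` is periodic exactly when `u` has odd order, i.e. when
`u ^ r = 1` or `u ^ s = 1`, where `r` and `s` are the odd parts of `q - 1` and `q + 1`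
(`periodic_iff`). For odd `q`, the two groups of roots of unity meet only in `1`, and
`u ↦ u + u⁻¹` is two-to-one on their union except at `u = 1`, so there are exactly `(r + s) / 2`
periodic points (`two_mul_perCount`).

One of `q - 1`, `q + 1` is not divisible by four, so `r + s ≥ q / 2` and the proportion of periodic
points is always at least `1 / 4`; in characteristic two every point is periodic. If `2 ^ n`
divides `q - 1`, then `s = (q + 1) / 2` and `r ≤ q / 2 ^ n`, so the proportion is at most
`1 / 4 + o(1)` as `n, q → ∞`. Such `q` occur as norms of primes of any number field: take primes
above rational primes `p ≡ 1` modulo `2 ^ n` (`exists_prime_absNorm_modEq_one`). Only this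
elementary case of Dirichlet's theorem is needed.
-/

open Polynomial NumberField Filter

/-- The number of periodic points of the evaluation map of a polynomial `g` over a
commutative ring. -/
noncomputable def perCount {F : Type*} [CommRing F] (g : F[X]) : ℕ :=
  Nat.card {α : F | ∃ m, 1 ≤ m ∧ (fun x => g.eval x)^[m] α = α}

/-- `Per_inf(f, K)`: the liminf, as `N(𝔭) → ∞`, of the proportion of periodic points of the
reduction of `f` modulo a nonzero prime ideal `𝔭` of `𝓞 K`. -/
noncomputable def perInf (K : Type*) [Field K] [NumberField K] (f : (𝓞 K)[X]) : ℝ :=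
  liminf
    (fun 𝔭 : {I : Ideal (𝓞 K) // I.IsPrime ∧ I ≠ ⊥} =>
      (perCount (f.map (Ideal.Quotient.mk 𝔭.1)) : ℝ) / (Ideal.absNorm 𝔭.1 : ℝ))
    (comap (fun 𝔭 : {I : Ideal (𝓞 K) // I.IsPrime ∧ I ≠ ⊥} => Ideal.absNorm 𝔭.1) atTop)

/-! ### The parametrization `x = u + u⁻¹` -/

lemma add_inv_eq_add_inv_iff {A : Type*} [Field A] {a b : A} (ha : a ≠ 0) (hb : b ≠ 0) :
    a + a⁻¹ = b + b⁻¹ ↔ a = b ∨ a = b⁻¹ := by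
  constructor
  · intro h
    have h2 : (a - b) * (a * b - 1) = 0 := by
      field_simp at h
      linear_combination h
    rcases mul_eq_zero.mp h2 with h3 | h3
    · exact .inl (sub_eq_zero.mp h3)
    · exact .inr (eq_inv_of_mul_eq_one_left (sub_eq_zero.mp h3))
  · rintro (rfl | rfl)
    · rfl
    · rw [inv_inv, add_comm]

/-- Every element of an algebraically closed field has the form `u + u⁻¹`. -/
lemma exists_add_inv_eq {A : Type*} [Field A] [IsAlgClosed A] (x : A) :
    ∃ u : A, u ≠ 0 ∧ u + u⁻¹ = x := by
  obtain ⟨u, hu⟩ := IsAlgClosed.exists_root (X ^ 2 - C x * X + 1 : A[X]) (by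
    have : (X ^ 2 - C x * X + 1 : A[X]).degree = 2 := by compute_degree!
    rw [this]; decide)
  have h : u ^ 2 - x * u + 1 = 0 := by simpa [IsRoot] using hu
  have hu0 : u ≠ 0 := by rintro rfl; simp at h
  refine ⟨u, hu0, ?_⟩
  field_simp
  linear_combination h

/-- Elements fixed by the `q`-power Frobenius lie in the field with `q` elements, since
`X ^ q - X` already has `q` roots there. -/
lemma mem_range_of_pow_card {F A : Type*} [Field F] [Fintype F] [Field A] [Algebra F A] {x : A}
    (h : x ^ Fintype.card F = x) : ∃ y : F, algebraMap F A y = x := by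
  classical
  have hne : (X ^ Fintype.card F - X : A[X]) ≠ 0 :=
    FiniteField.X_pow_card_sub_X_ne_zero A Fintype.one_lt_card
  have hsub : Finset.univ.image (algebraMap F A) ⊆
      (X ^ Fintype.card F - X : A[X]).roots.toFinset := by
    intro z hz
    obtain ⟨y, -, rfl⟩ := Finset.mem_image.mp hz
    simp [hne, ← map_pow, FiniteField.pow_card]
  have hcard : (X ^ Fintype.card F - X : A[X]).roots.toFinset.card ≤
      (Finset.univ.image (algebraMap F A)).card := by
    rw [Finset.card_image_of_injective _ (algebraMap F A).injective, Finset.card_univ]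
    refine (Multiset.toFinset_card_le _).trans ((card_roots' _).trans ?_)
    rw [FiniteField.X_pow_card_sub_X_natDegree_eq A Fintype.one_lt_card]
  have hx : x ∈ Finset.univ.image (algebraMap F A) := by
    rw [Finset.eq_of_subset_of_card_le hsub hcard]
    simp [hne, h]
  simpa using hx

lemma add_inv_pow_card {F A : Type*} [Field F] [Fintype F] [Field A] [Algebra F A] (u : A) :
    (u + u⁻¹) ^ Fintype.card F = u ^ Fintype.card F + (u ^ Fintype.card F)⁻¹ := by
  have := map_add (FiniteField.frobeniusAlgHom F A) u u⁻¹
  simpa using this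

/-- Under `x = u + u⁻¹` the Chebyshev polynomial `T_d` becomes the power map `u ↦ u ^ d`. -/
lemma algebraMap_iterate_dickson {F A : Type*} [Field F] [Field A] [Algebra F A] (d : ℕ)
    {x : F} {u : A} (hu : u ≠ 0) (hx : algebraMap F A x = u + u⁻¹) (m : ℕ) :
    algebraMap F A ((fun y => (dickson 1 1 d : F[X]).eval y)^[m] x) =
      u ^ d ^ m + (u ^ d ^ m)⁻¹ := by
  induction m with
  | zero => simpa using hx
  | succ m ih =>
    have hp : u ^ d ^ m ≠ 0 := pow_ne_zero _ hu
    rw [Function.iterate_succ_apply', ← eval_map_apply, map_dickson, map_one, ih,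
      dickson_one_one_eval_add_inv _ _ (mul_inv_cancel₀ hp), inv_pow, ← pow_mul, ← pow_succ]

/-- `u + u⁻¹` is fixed by the `n`-th power map on `u` exactly when `u` is killed by one of
`n - 1` and `n + 1`. -/
lemma pow_add_inv_eq_iff {A : Type*} [Field A] {u : A} (hu : u ≠ 0) {n : ℕ} (hn : 1 ≤ n) :
    u ^ n + (u ^ n)⁻¹ = u + u⁻¹ ↔ u ^ (n - 1) = 1 ∨ u ^ (n + 1) = 1 := by
  rw [add_inv_eq_add_inv_iff (pow_ne_zero _ hu) hu]
  obtain ⟨k, rfl⟩ : ∃ k, n = k + 1 := ⟨n - 1, by omega⟩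
  refine or_congr ?_ ?_
  · rw [pow_succ, add_tsub_cancel_right]
    exact mul_eq_right₀ hu
  · rw [pow_succ u (k + 1)]
    exact (mul_eq_one_iff_eq_inv₀ hu).symm

lemma pow_eq_one_of_odd_of_two_pow {A : Type*} [Field A] {u : A} {e a r : ℕ} (he : Odd e)
    (h1 : u ^ e = 1) (h2 : u ^ (2 ^ a * r) = 1) : u ^ r = 1 := by
  rw [← orderOf_dvd_iff_pow_eq_one] at *
  have : Odd (orderOf u) := he.of_dvd_nat h1
  exact (Nat.Coprime.pow_right a this.coprime_two_right).dvd_of_dvd_mul_left h2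

/-! ### Counting periodic points over a finite field -/

/-- With `q - 1 = 2 ^ a * r`, `q + 1 = 2 ^ b * s` and `r`, `s` odd, the periodic points of
`T_(2 ^ k)` on the field with `q` elements are the `u + u⁻¹` with `u ^ r = 1` or `u ^ s = 1`. -/
lemma periodic_iff {F A : Type*} [Field F] [Fintype F] [Field A] [Algebra F A]
    [IsAlgClosed A] {k a b r s : ℕ} (hk : 1 ≤ k) (hr : Odd r) (hs : Odd s)
    (har : Fintype.card F - 1 = 2 ^ a * r) (hbs : Fintype.card F + 1 = 2 ^ b * s) (x : F) :
    (∃ m, 1 ≤ m ∧ (fun y => (dickson 1 1 (2 ^ k) : F[X]).eval y)^[m] x = x) ↔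
      ∃ u : A, (u ^ r = 1 ∨ u ^ s = 1) ∧ u + u⁻¹ = algebraMap F A x := by
  constructor
  · rintro ⟨m, hm, hx⟩
    obtain ⟨u, hu, hux⟩ := exists_add_inv_eq (algebraMap F A x)
    refine ⟨u, ?_, hux⟩
    have h1 := algebraMap_iterate_dickson (2 ^ k) hu hux.symm m
    have hN : 1 ≤ (2 ^ k) ^ m := Nat.one_le_pow _ _ (by positivity)
    have hNe : Even ((2 ^ k) ^ m) := by
      rw [Nat.even_pow, Nat.even_pow]
      exact ⟨⟨even_two, by omega⟩, by omega⟩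
    rw [hx, ← hux, eq_comm, pow_add_inv_eq_iff hu hN] at h1
    -- `2 ^ (k * m) ± 1` is odd, so a periodic point comes from some `u` of odd order.
    obtain ⟨e, he, hue⟩ : ∃ e, Odd e ∧ u ^ e = 1 := by
      rcases h1 with h1 | h1
      · exact ⟨_, Nat.Even.sub_odd hN hNe odd_one, h1⟩
      · exact ⟨_, hNe.add_one, h1⟩
    have h2 : u ^ Fintype.card F + (u ^ Fintype.card F)⁻¹ = u + u⁻¹ := by
      rw [← add_inv_pow_card, hux, ← map_pow, FiniteField.pow_card]
    rw [pow_add_inv_eq_iff hu Fintype.card_pos, har, hbs] at h2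
    exact h2.imp (pow_eq_one_of_odd_of_two_pow he hue) (pow_eq_one_of_odd_of_two_pow he hue)
  · rintro ⟨u, hu, hux⟩
    obtain ⟨e, he, hue⟩ : ∃ e, Odd e ∧ u ^ e = 1 := by
      rcases hu with h | h
      exacts [⟨r, hr, h⟩, ⟨s, hs, h⟩]
    have hu0 : u ≠ 0 := by
      rintro rfl
      rw [zero_pow he.pos.ne'] at hue
      exact zero_ne_one hue
    refine ⟨e.totient, Nat.totient_pos.mpr he.pos, (algebraMap F A).injective ?_⟩
    have hmod : (2 ^ k) ^ e.totient ≡ 1 [MOD e] :=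
      Nat.ModEq.pow_totient (Nat.Coprime.pow_left k he.coprime_two_left)
    have hpow : u ^ (2 ^ k) ^ e.totient = u := by
      have hN : 1 ≤ (2 ^ k) ^ e.totient := Nat.one_le_pow _ _ (by positivity)
      obtain ⟨c, hc⟩ := (Nat.modEq_iff_dvd' hN).mp hmod.symm
      rw [← Nat.sub_add_cancel hN, hc, pow_succ, pow_mul, hue, one_pow, one_mul]
    rw [algebraMap_iterate_dickson (2 ^ k) hu0 hux.symm, hpow, hux]

/-- Over a field with an odd number `q` of elements, `T_(2 ^ k)` has exactly `(r + s) / 2`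
periodic points, `r` and `s` being the odd parts of `q - 1` and `q + 1`: the `r + s - 1` roots of
unity of order dividing `r` or `s` are matched in pairs `u, u⁻¹`, apart from `u = 1`. -/
lemma two_mul_perCount {F : Type*} [Field F] [Fintype F] {k a b r s : ℕ}
    (hk : 1 ≤ k) (hr : Odd r) (hs : Odd s) (hq : Odd (Fintype.card F))
    (har : Fintype.card F - 1 = 2 ^ a * r) (hbs : Fintype.card F + 1 = 2 ^ b * s) :
    2 * perCount (dickson 1 1 (2 ^ k) : F[X]) = r + s := by
  classical
  let A := AlgebraicClosure F
  have hq0 : (Fintype.card F : A) = 0 := by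
    rw [← map_natCast (algebraMap F A), Nat.cast_card_eq_zero, map_zero]
  have hrA : (r : A) ≠ 0 := by
    intro h
    have : ((Fintype.card F - 1 : ℕ) : A) = 0 := by
      rw [har, Nat.cast_mul, h, mul_zero]
    rw [Nat.cast_sub Fintype.card_pos, hq0] at this
    simp at this
  have hsA : (s : A) ≠ 0 := by
    intro h
    have : ((Fintype.card F + 1 : ℕ) : A) = 0 := by
      rw [hbs, Nat.cast_mul, h, mul_zero]
    rw [Nat.cast_add, hq0] at this
    simp at this
  have h2A : (2 : A) ≠ 0 := by
    intro h
    obtain ⟨c, hc⟩ := hq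
    have := hq0
    rw [hc, Nat.cast_add, Nat.cast_mul, Nat.cast_ofNat, h, zero_mul, zero_add] at this
    simp at this
  have cardroots : ∀ n : ℕ, (n : A) ≠ 0 → (nthRootsFinset n (1 : A)).card = n := by
    intro n hn
    have : NeZero (n : A) := ⟨hn⟩
    obtain ⟨ζ, hζ⟩ := HasEnoughRootsOfUnity.exists_primitiveRoot A n
    exact hζ.card_nthRootsFinset
  set U : Finset A := nthRootsFinset r 1 ∪ nthRootsFinset s 1 with hU
  have memU : ∀ u, u ∈ U ↔ u ^ r = 1 ∨ u ^ s = 1 := fun u => by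
    rw [hU, Finset.mem_union, mem_nthRootsFinset hr.pos, mem_nthRootsFinset hs.pos]
  have hU0 : ∀ u ∈ U, u ≠ 0 := by
    rintro u hu rfl
    rw [memU, zero_pow hr.pos.ne', zero_pow hs.pos.ne'] at hu
    simp at hu
  have hUinv : ∀ u ∈ U, u⁻¹ ∈ U := by
    intro u hu
    rw [memU] at hu ⊢
    simpa using hu
  have hUsq : ∀ u ∈ U, u ^ 2 = 1 → u = 1 := by
    intro u hu h2
    rw [memU] at hu
    have key : ∀ n, Odd n → u ^ n = 1 → u = 1 := by
      intro n hn h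
      have := pow_eq_one_of_odd_of_two_pow (a := 1) (r := 1) hn h (by simpa using h2)
      simpa using this
    exact hu.elim (key r hr) (key s hs)
  have hinter : nthRootsFinset r (1 : A) ∩ nthRootsFinset s 1 = {1} := by
    ext u
    rw [Finset.mem_inter, mem_nthRootsFinset hr.pos, mem_nthRootsFinset hs.pos,
      Finset.mem_singleton]
    constructor
    · rintro ⟨h1, h2⟩
      have hu : u ∈ U := (memU u).mpr (.inl h1)
      apply hUsq u hu
      have e1 : u ^ (Fintype.card F - 1) = 1 := by rw [har, mul_comm, pow_mul, h1, one_pow]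
      have e2 : u ^ (Fintype.card F + 1) = 1 := by rw [hbs, mul_comm, pow_mul, h2, one_pow]
      have e3 : Fintype.card F + 1 = (Fintype.card F - 1) + 2 := by
        have : 0 < Fintype.card F := Fintype.card_pos
        omega
      rwa [e3, pow_add, e1, one_mul] at e2
    · rintro rfl
      simp
  have hUcard : U.card + 1 = r + s := by
    have := Finset.card_union_add_card_inter (nthRootsFinset r (1 : A)) (nthRootsFinset s 1)
    rwa [hinter, Finset.card_singleton, cardroots r hrA, cardroots s hsA] at this
  set P : Finset A := U.image (fun u => u + u⁻¹) with hP
  have h1U : (1 : A) ∈ U := by simp [memU]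
  have h2P : (2 : A) ∈ P := by
    refine Finset.mem_image.mpr ⟨1, h1U, ?_⟩
    norm_num
  -- The fibre over `v + v⁻¹` is `{v, v⁻¹}`, which degenerates only at `v = 1`, lying over `2`.
  have hfib : ∀ x ∈ P, (U.filter (fun u => u + u⁻¹ = x)).card + (if x = 2 then 1 else 0) = 2 := by
    intro x hx
    obtain ⟨v, hv, rfl⟩ := Finset.mem_image.mp hx
    have hv0 := hU0 v hv
    have hset : U.filter (fun u => u + u⁻¹ = v + v⁻¹) = {v, v⁻¹} := by
      ext u
      rw [Finset.mem_filter, Finset.mem_insert, Finset.mem_singleton]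
      constructor
      · rintro ⟨hu, h⟩
        exact (add_inv_eq_add_inv_iff (hU0 u hu) hv0).mp h
      · rintro (rfl | rfl)
        · exact ⟨hv, rfl⟩
        · exact ⟨hUinv v hv, by rw [inv_inv, add_comm]⟩
    rw [hset]
    by_cases h1 : v = 1
    · subst h1
      norm_num
    · have hne : v ≠ v⁻¹ := by
        intro h
        apply h1
        apply hUsq v hv
        rw [sq]
        nth_rewrite 2 [h]
        exact mul_inv_cancel₀ hv0
      rw [Finset.card_pair hne, if_neg]
      intro h
      apply h1
      have : v + v⁻¹ = 1 + 1⁻¹ := by rw [h]; norm_num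
      simpa using (add_inv_eq_add_inv_iff hv0 one_ne_zero).mp this
  have hPcard : U.card + 1 = 2 * P.card := by
    rw [Finset.card_eq_sum_card_image (fun u : A => u + u⁻¹) U]
    have := Finset.sum_congr rfl hfib
    rw [Finset.sum_add_distrib, Finset.sum_ite_eq' P 2, if_pos h2P, Finset.sum_const,
      smul_eq_mul, mul_comm] at this
    exact this
  have hper : perCount (dickson 1 1 (2 ^ k) : F[X]) = P.card := by
    rw [perCount, ← Nat.card_image_of_injective (algebraMap F A).injective,
      ← Set.ncard_coe_finset P, ← Nat.card_coe_set_eq]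
    congr 2
    ext z
    rw [Set.mem_image, Finset.mem_coe, hP, Finset.mem_image]
    constructor
    · rintro ⟨x, hx, rfl⟩
      obtain ⟨u, hu, hux⟩ := (periodic_iff (A := A) hk hr hs har hbs x).mp hx
      exact ⟨u, (memU u).mpr hu, hux⟩
    · rintro ⟨u, hu, rfl⟩
      have hfix : (u + u⁻¹) ^ Fintype.card F = u + u⁻¹ := by
        rw [add_inv_pow_card, pow_add_inv_eq_iff (hU0 u hu) Fintype.card_pos, har, hbs,
          mul_comm, pow_mul, mul_comm, pow_mul]
        exact ((memU u).mp hu).imp (fun h => by rw [h, one_pow]) (fun h => by rw [h, one_pow])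
      obtain ⟨x, hx⟩ := mem_range_of_pow_card hfix
      exact ⟨x, (periodic_iff hk hr hs har hbs x).mpr ⟨u, (memU u).mp hu, hx.symm⟩, hx⟩
  omega

/-- In characteristic two `T_(2 ^ k)` is the bijection `x ↦ x ^ (2 ^ k)`, so every point is
periodic. -/
lemma perCount_of_even {F : Type*} [Field F] [Fintype F] {k : ℕ}
    (hq : ¬ Odd (Fintype.card F)) : perCount (dickson 1 1 (2 ^ k) : F[X]) = Fintype.card F := by
  have hchar : CharP F 2 := by
    have h2 : ringChar F = 2 := FiniteField.even_card_iff_char_two.mpr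
      (Nat.even_iff.mp (Nat.not_odd_iff_even.mp hq))
    exact h2 ▸ ringChar.charP F
  have hdick : (dickson 1 1 (2 ^ k) : F[X]) = X ^ 2 ^ k := by
    induction k with
    | zero => simp
    | succ k ih =>
      rw [pow_succ, dickson_one_one_mul, ih, dickson_one_one_charP F 2, X_pow_comp, ← pow_mul,
        mul_comm]
  have hinj : Function.Injective (fun x : F => (dickson 1 1 (2 ^ k) : F[X]).eval x) := by
    intro x y hxy
    simp only [hdick, eval_pow, eval_X] at hxy
    exact iterateFrobenius_inj F 2 k hxy
  have huniv : {α : F | ∃ m, 1 ≤ m ∧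
      (fun x => (dickson 1 1 (2 ^ k) : F[X]).eval x)^[m] α = α} = Set.univ :=
    Set.eq_univ_of_forall fun α => hinj.mem_periodicPts α
  rw [perCount, huniv, Nat.card_univ, Nat.card_eq_fintype_card]

/-- At least a quarter of the points of any finite field are periodic. -/
lemma card_le_four_mul_perCount {F : Type*} [Field F] [Fintype F] {k : ℕ} (hk : 1 ≤ k) :
    Fintype.card F ≤ 4 * perCount (dickson 1 1 (2 ^ k) : F[X]) := by
  by_cases hq : Odd (Fintype.card F)
  · have h1 : 1 < Fintype.card F := Fintype.one_lt_card
    obtain ⟨a, r, hr, har⟩ := Nat.exists_eq_two_pow_mul_odd (n := Fintype.card F - 1) (by omega)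
    obtain ⟨b, s, hs, hbs⟩ := Nat.exists_eq_two_pow_mul_odd (n := Fintype.card F + 1) (by omega)
    have h2 := two_mul_perCount hk hr hs hq har hbs
    have hrpos := hr.pos
    have hspos := hs.pos
    -- `q - 1` and `q + 1` are not both divisible by four.
    have hab : a ≤ 1 ∨ b ≤ 1 := by
      by_contra! h
      have ha : 4 ∣ Fintype.card F - 1 := har ▸ (pow_dvd_pow 2 h.1).mul_right r
      have hb : 4 ∣ Fintype.card F + 1 := hbs ▸ (pow_dvd_pow 2 h.2).mul_right s
      omega
    rcases hab with h | h
    · interval_cases a <;> omega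
    · interval_cases b <;> omega
  · rw [perCount_of_even hq]
    omega

/-- If `2 ^ n` divides `q - 1`, the odd part of `q - 1` is at most `q / 2 ^ n`, so the periodic
points are little more than a quarter of the field. -/
lemma perCount_le_of_modEq {F : Type*} [Field F] [Fintype F] {k n : ℕ} (hk : 1 ≤ k) (hn : 2 ≤ n)
    (hq : Fintype.card F ≡ 1 [MOD 2 ^ n]) :
    (perCount (dickson 1 1 (2 ^ k) : F[X]) : ℝ) / Fintype.card F ≤
      1 / 4 + 1 / (4 * Fintype.card F) + 1 / 2 ^ n := by
  have h1 : 1 < Fintype.card F := Fintype.one_lt_card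
  have hdvd : 2 ^ n ∣ Fintype.card F - 1 := (Nat.modEq_iff_dvd' h1.le).mp hq.symm
  have h4 : 4 ∣ Fintype.card F - 1 := (pow_dvd_pow 2 hn).trans hdvd
  have hodd : Odd (Fintype.card F) := by
    rw [Nat.odd_iff]
    omega
  obtain ⟨a, r, hr, har⟩ := Nat.exists_eq_two_pow_mul_odd (n := Fintype.card F - 1) (by omega)
  obtain ⟨s, hs⟩ : ∃ s, Fintype.card F + 1 = 2 ^ 1 * s := ⟨(Fintype.card F + 1) / 2, by omega⟩
  have hsodd : Odd s := by
    rw [Nat.odd_iff]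
    omega
  have h2 := two_mul_perCount hk hr hsodd hodd har hs
  have hle : 2 ^ n * r ≤ Fintype.card F := by
    rw [har] at hdvd
    have h3 : 2 ^ n ∣ 2 ^ a :=
      (Nat.Coprime.pow_left n hr.coprime_two_left).dvd_of_dvd_mul_right hdvd
    have := Nat.mul_le_mul_right r (Nat.le_of_dvd (by positivity) h3)
    omega
  have hcount : 4 * perCount (dickson 1 1 (2 ^ k) : F[X]) = Fintype.card F + 1 + 2 * r := by omega
  have hcount' : 4 * (perCount (dickson 1 1 (2 ^ k) : F[X]) : ℝ) = Fintype.card F + 1 + 2 * r := by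
    exact_mod_cast hcount
  have hle' : (2 : ℝ) ^ n * r ≤ Fintype.card F := by exact_mod_cast hle
  have hqpos : (0 : ℝ) < Fintype.card F := by exact_mod_cast Fintype.card_pos
  have hrq : (r : ℝ) / Fintype.card F ≤ 1 / 2 ^ n := by
    rw [div_le_div_iff₀ hqpos (by positivity)]
    linarith
  have hr0 : 0 ≤ (r : ℝ) / Fintype.card F := by positivity
  calc (perCount (dickson 1 1 (2 ^ k) : F[X]) : ℝ) / Fintype.card F
      = 1 / 4 + 1 / (4 * Fintype.card F) + (r / Fintype.card F) / 2 := by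
        field_simp
        linarith
    _ ≤ _ := by linarith

/-! ### Primes of a number field -/

/-- There are primes of `K` of arbitrarily large norm congruent to `1` modulo `N`: take any prime
above a rational prime `p ≡ 1` modulo `N`, its norm being a power of `p`. -/
lemma exists_prime_absNorm_modEq_one (K : Type*) [Field K] [NumberField K] (B N : ℕ)
    (hN : N ≠ 0) : ∃ 𝔭 : {I : Ideal (𝓞 K) // I.IsPrime ∧ I ≠ ⊥},
      B ≤ Ideal.absNorm 𝔭.1 ∧ Ideal.absNorm 𝔭.1 ≡ 1 [MOD N] := by
  obtain ⟨p, hp, hBp, hpN⟩ := Nat.exists_prime_gt_modEq_one B hN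
  have hfr : Module.finrank ℤ (𝓞 K) ≠ 0 := by
    rw [RingOfIntegers.rank]
    exact Module.finrank_pos.ne'
  have hne : Ideal.span {(p : 𝓞 K)} ≠ ⊤ := by
    intro h
    have h1 := Ideal.absNorm_span_natCast (S := 𝓞 K) p
    rw [h, Ideal.absNorm_top, eq_comm, Nat.pow_eq_one] at h1
    exact h1.elim hp.ne_one hfr
  obtain ⟨M, hM, hle⟩ := Ideal.exists_le_maximal _ hne
  have hbot : M ≠ ⊥ := by
    rintro rfl
    rw [le_bot_iff, Ideal.span_singleton_eq_bot, Nat.cast_eq_zero] at hle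
    exact hp.ne_zero hle
  have hdvd : Ideal.absNorm M ∣ p ^ Module.finrank ℤ (𝓞 K) := by
    rw [← Ideal.absNorm_span_natCast (S := 𝓞 K)]
    exact Ideal.absNorm_dvd_absNorm_of_le hle
  obtain ⟨j, -, hj⟩ := (Nat.dvd_prime_pow hp).mp hdvd
  have hj0 : j ≠ 0 := by
    rintro rfl
    rw [pow_zero, Ideal.absNorm_eq_one_iff] at hj
    exact hM.ne_top hj
  refine ⟨⟨M, hM.isPrime, hbot⟩, ?_, ?_⟩
  · rw [hj]
    exact hBp.le.trans (Nat.le_self_pow hj0 p)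
  · rw [hj]
    simpa using hpN.pow j

theorem perInf_chebyshev_even_prime_power (K : Type*) [Field K] [NumberField K]
    (k d : ℕ) (hk : 1 ≤ k) (hd : d = 2 ^ k) :
    perInf K (Polynomial.dickson 1 1 d : (𝓞 K)[X]) = 1 / 4 := by
  subst hd
  rw [perInf]
  set φ : {I : Ideal (𝓞 K) // I.IsPrime ∧ I ≠ ⊥} → ℝ := fun 𝔭 =>
    (perCount ((dickson 1 1 (2 ^ k) : (𝓞 K)[X]).map (Ideal.Quotient.mk 𝔭.1)) : ℝ) /
      (Ideal.absNorm 𝔭.1 : ℝ) with hφ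
  set l := comap (fun 𝔭 : {I : Ideal (𝓞 K) // I.IsPrime ∧ I ≠ ⊥} => Ideal.absNorm 𝔭.1) atTop
    with hl
  have hlower : ∀ 𝔭, 1 / 4 ≤ φ 𝔭 := by
    intro 𝔭
    have hmax : 𝔭.1.IsMaximal := 𝔭.2.1.isMaximal 𝔭.2.2
    let : Field (𝓞 K ⧸ 𝔭.1) := Ideal.Quotient.field 𝔭.1
    have := Ideal.finiteQuotientOfFreeOfNeBot 𝔭.1 𝔭.2.2
    let := Fintype.ofFinite (𝓞 K ⧸ 𝔭.1)
    have hcard : Ideal.absNorm 𝔭.1 = Fintype.card (𝓞 K ⧸ 𝔭.1) := by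
      rw [Ideal.absNorm_apply, Submodule.cardQuot_apply, Nat.card_eq_fintype_card]
    have h := card_le_four_mul_perCount (F := 𝓞 K ⧸ 𝔭.1) hk
    have hpos : (0 : ℝ) < Fintype.card (𝓞 K ⧸ 𝔭.1) := by exact_mod_cast Fintype.card_pos
    simp only [hφ, map_dickson, map_one, hcard]
    rw [div_le_div_iff₀ (by norm_num) hpos, one_mul, mul_comm]
    exact_mod_cast h
  have hupper : ∀ ε : ℝ, 0 < ε → ∃ᶠ 𝔭 in l, φ 𝔭 ≤ 1 / 4 + ε := by
    intro ε hε
    rw [hl, (atTop_basis.comap _).frequently_iff]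
    intro B _
    -- The error terms `1 / 2 ^ (n + 2)` and `1 / (4 * q)` are each made at most `ε / 2`.
    obtain ⟨n, hn⟩ := exists_pow_lt_of_lt_one (half_pos hε) (by norm_num : (1 / 2 : ℝ) < 1)
    obtain ⟨c, hc⟩ := exists_nat_gt (1 / ε)
    obtain ⟨𝔭, h𝔭, hmod⟩ :=
      exists_prime_absNorm_modEq_one K (max B c) (2 ^ (n + 2)) (by positivity)
    refine ⟨𝔭, (le_max_left B c).trans h𝔭, ?_⟩
    have hmax : 𝔭.1.IsMaximal := 𝔭.2.1.isMaximal 𝔭.2.2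
    let : Field (𝓞 K ⧸ 𝔭.1) := Ideal.Quotient.field 𝔭.1
    have := Ideal.finiteQuotientOfFreeOfNeBot 𝔭.1 𝔭.2.2
    let := Fintype.ofFinite (𝓞 K ⧸ 𝔭.1)
    have hcard : Ideal.absNorm 𝔭.1 = Fintype.card (𝓞 K ⧸ 𝔭.1) := by
      rw [Ideal.absNorm_apply, Submodule.cardQuot_apply, Nat.card_eq_fintype_card]
    have hcq : (c : ℝ) ≤ Fintype.card (𝓞 K ⧸ 𝔭.1) := by
      exact_mod_cast hcard ▸ (le_max_right B c).trans h𝔭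
    rw [hcard] at hmod
    have h := perCount_le_of_modEq (F := 𝓞 K ⧸ 𝔭.1) hk (by omega) hmod
    simp only [hφ, map_dickson, map_one, hcard]
    refine h.trans ?_
    have hpos : (0 : ℝ) < Fintype.card (𝓞 K ⧸ 𝔭.1) := by exact_mod_cast Fintype.card_pos
    have h1 : 1 / (4 * (Fintype.card (𝓞 K ⧸ 𝔭.1) : ℝ)) ≤ ε / 2 := by
      have h2 : 1 < (Fintype.card (𝓞 K ⧸ 𝔭.1) : ℝ) * ε := by
        rw [div_lt_iff₀ hε] at hc
        nlinarith
      rw [div_le_iff₀ (by positivity)]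
      linarith
    have h2 : 1 / (2 : ℝ) ^ (n + 2) ≤ ε / 2 := by
      refine le_trans ?_ hn.le
      rw [one_div_pow]
      exact one_div_le_one_div_of_le (by positivity)
        (pow_le_pow_right₀ (by norm_num) (by omega))
    linarith
  apply le_antisymm
  · refine le_of_forall_pos_le_add fun ε hε => ?_
    exact liminf_le_of_frequently_le (hupper ε hε)
      (isBoundedUnder_of ⟨1 / 4, hlower⟩)
  · exact le_liminf_of_le (IsCoboundedUnder.of_frequently_le (hupper 1 one_pos))
      (Eventually.of_forall hlower)
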